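/- Let (M, Ω, V) be a graded von Neumann algebra. Then Z(M, V) = {0} if and only if the automorphism Ad_V is freely acting on M, i.e. the only x ∈ M satisfying x y = (V y V) x for all y ∈ M is x = 0. -/

import Mathlib

open scoped InnerProductSpace ComplexOrder

noncomputable section

variable {H : Type*} [NormedAddCommGroup H] [InnerProductSpace ℂ H] [CompleteSpace H]

/-- A graded von Neumann algebra in standard form: a von Neumann algebra `M` with a cyclic
and separating vector `Ω`, the associated modular data `(J, Δ^{it})` (characterized by the
Tomita-Takesaki relations below), and a `ℤ₂`-grading `V`. -/
structure GradedVN (H : Type*) [NormedAddCommGroup H] [InnerProductSpace ℂ H]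
    [CompleteSpace H] where
  M : VonNeumannAlgebra H
  Ω : H
  cyclic : Dense {ξ : H | ∃ x ∈ M, x Ω = ξ}
  separating : ∀ x ∈ M, x Ω = 0 → x = 0
  /-- the modular conjugation (an antiunitary involution) -/
  J : H → H
  J_add : ∀ ξ η, J (ξ + η) = J ξ + J η
  J_smul : ∀ (c : ℂ) (ξ), J (c • ξ) = starRingEnd ℂ c • J ξ
  J_inner : ∀ ξ η, ⟪J ξ, J η⟫_ℂ = ⟪η, ξ⟫_ℂ
  J_invol : ∀ ξ, J (J ξ) = ξ
  J_Ω : J Ω = Ω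
  /-- the modular group `Δ^{it}` -/
  U : ℝ → H ≃ₗᵢ[ℂ] H
  U_zero : ∀ ξ, U 0 ξ = ξ
  U_add : ∀ s t ξ, U (s + t) ξ = U s (U t ξ)
  U_cont : ∀ ξ, Continuous fun t : ℝ => U t ξ
  U_Ω : ∀ t, U t Ω = Ω
  J_U : ∀ t ξ, J (U t ξ) = U t (J ξ)
  flow_mem : ∀ t : ℝ, ∀ x ∈ M, ∃ y ∈ M, ∀ ξ, y ξ = U t (x (U (-t) ξ))
  /-- `J M J ⊆ M'` -/
  tomita : ∀ x ∈ M, ∀ y ∈ M, ∀ ξ, J (x (J (y ξ))) = y (J (x (J ξ)))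
  /-- `S = J Δ^{1/2}` maps `xΩ` to `x*Ω`, expressed via analytic continuation of the
  modular group. -/
  S_cond : ∀ x ∈ M, ∀ f : ℂ → H, Differentiable ℂ f → (∀ t : ℝ, f (t : ℂ) = U t (x Ω)) →
    J (f (-(Complex.I) / 2)) = star x Ω
  /-- the grading -/
  V : H →L[ℂ] H
  V_star : star V = V
  V_invol : ∀ ξ, V (V ξ) = ξ
  V_Ω : V Ω = Ω
  V_mem : ∀ x ∈ M, ∃ y ∈ M, ∀ ξ, y ξ = V (x (V ξ))

namespace GradedVN

variable (N : GradedVN H)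

/-- The `V`-twisted center `Z(M, V) = {x ∈ M | J x* J = x V}`. -/
def twistedCenter : Set (H →L[ℂ] H) :=
  {x | x ∈ N.M ∧ ∀ ξ, N.J (star x (N.J ξ)) = x (N.V ξ)}

/-- The center `Z(M)` of `M`. -/
def centerSet : Set (H →L[ℂ] H) :=
  {z | z ∈ N.M ∧ ∀ y ∈ N.M, z * y = y * z}

/-- The `Ad_V`-fixed points `M^γ`. -/
def gammaFixed : Set (H →L[ℂ] H) :=
  {x | x ∈ N.M ∧ ∀ ξ, N.V (x (N.V ξ)) = x ξ}

/-- The fixed points `M^α` of the modular flow. -/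
def flowFixed : Set (H →L[ℂ] H) :=
  {x | x ∈ N.M ∧ ∀ (t : ℝ) (ξ), x (N.U t ξ) = N.U t (x ξ)}

/-- The centralizer `Z_Ω(M)`. -/
def centralizerSet : Set (H →L[ℂ] H) :=
  {x | x ∈ N.M ∧ ∀ y ∈ N.M, ⟪N.Ω, x (y N.Ω)⟫_ℂ = ⟪N.Ω, y (x N.Ω)⟫_ℂ}

/-- The twisted center of the reduced algebra `(M_p, V_p)` for a central `Ad_V`-invariant
projection `p` (for such `p`, the modular conjugation of `(pMp, pΩ)` is `J` restricted
to `pH`, so the relative twisted center consists of the `p`-supported elements of `M`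
satisfying the twisted-center relation). -/
def tcRel (p : H →L[ℂ] H) : Set (H →L[ℂ] H) :=
  {x | x ∈ N.M ∧ x * p = x ∧ p * x = x ∧ ∀ ξ, N.J (star x (N.J ξ)) = x (N.V ξ)}

/-- `p` is an `Ad_V`-invariant central projection. -/
def IsCentralInvProj (p : H →L[ℂ] H) : Prop :=
  p ∈ N.centerSet ∧ star p = p ∧ p * p = p ∧ ∀ ξ, N.V (p (N.V ξ)) = p ξ

/-- `p` is an `Ad_V`-invariant central projection carrying a partial isometry in the
relative twisted center which is unitary on `pH`. -/
def HasPI (p : H →L[ℂ] H) : Prop :=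
  N.IsCentralInvProj p ∧ ∃ u ∈ N.tcRel p, star u * u = p ∧ u * star u = p

/-- Asymptotically abelian modular flow: `[α_t(x), y] → 0` weakly as `t → ∞`. -/
def AsympAbelian : Prop :=
  ∀ x ∈ N.M, ∀ y ∈ N.M, ∀ ξ η : H,
    Filter.Tendsto
      (fun t : ℝ => ⟪ξ, N.U t (x (N.U (-t) (y η))) - y (N.U t (x (N.U (-t) η)))⟫_ℂ)
      Filter.atTop (nhds 0)

/-- `V`-graded asymptotically abelian modular flow:
`[α_t(x), y]_V = α_t(x) y − (V y V) α_t(x) → 0` weakly as `t → ∞`. -/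
def GradedAsympAbelian : Prop :=
  ∀ x ∈ N.M, ∀ y ∈ N.M, ∀ ξ η : H,
    Filter.Tendsto
      (fun t : ℝ =>
        ⟪ξ, N.U t (x (N.U (-t) (y η))) - N.V (y (N.V (N.U t (x (N.U (-t) η)))))⟫_ℂ)
      Filter.atTop (nhds 0)

end GradedVN

/-!
The twisted center is exactly the set of `x ∈ M` with `x y = (V y V) x` for all `y ∈ M`, and the
theorem is the case where this set is `{0}`.

The relation `J x* J = x V` makes `x V` commute with `M`, which is the intertwining relation.
Conversely, let `x` be an intertwiner. Its odd part `d = x - V x V` is again an intertwiner, whence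
`d d* = (V d* V) d = - d* d` and `d = 0`. Thus `x` is even, and then `⟨Ω, x y Ω⟩ = ⟨Ω, y x Ω⟩` for
`y ∈ M`, i.e. `x` lies in the centralizer of the vector state. By the KMS condition the entire
function `z ↦ ∫ exp (-(t - z)²) Δ^{it} x Ω dt` is then `i`-periodic, hence bounded, hence constant,
so `Δ^{it} x Ω = x Ω` and `J x Ω = x* Ω`. Therefore
`J x* J y Ω = y J x* Ω = y x Ω = x (V y V) Ω = x V y Ω`, and `Ω` is cyclic.
-/

open MeasureTheory Filter
open scoped BoundedContinuousFunction ComplexConjugate FourierTransform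

section Weierstrass

variable {E F : Type*} [NormedAddCommGroup E] [NormedSpace ℂ E]
  [NormedAddCommGroup F] [NormedSpace ℂ F]

/-- The Gaussian density centred at a complex point `z`, without normalization. -/
def gaussianKernel (z : ℂ) (t : ℝ) : ℂ := Complex.exp (-((t : ℂ) - z) ^ 2)

lemma continuous_gaussianKernel (z : ℂ) : Continuous (gaussianKernel z) := by
  unfold gaussianKernel
  fun_prop

lemma hasDerivAt_gaussianKernel (z : ℂ) (t : ℝ) :
    HasDerivAt (gaussianKernel · t) (gaussianKernel z t * (2 * (t - z))) z := by
  have exponent : HasDerivAt (fun z : ℂ => -((t : ℂ) - z) ^ 2) (2 * (t - z)) z :=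
    (((hasDerivAt_id z).const_sub (t : ℂ)).pow 2).neg.congr_deriv (by simp)
  exact exponent.cexp

lemma norm_gaussianKernel (z : ℂ) (t : ℝ) :
    ‖gaussianKernel z t‖ = Real.exp (z.im ^ 2) * Real.exp (-1 * (t - z.re) ^ 2) := by
  rw [gaussianKernel, Complex.norm_exp, ← Real.exp_add]
  congr 1
  simp only [pow_two, Complex.neg_re, Complex.mul_re, Complex.sub_re, Complex.sub_im,
    Complex.ofReal_re, Complex.ofReal_im]
  ring

lemma gaussianKernel_add (z : ℂ) (s t : ℝ) :
    gaussianKernel (z + s) (t + s) = gaussianKernel z t := by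
  simp [gaussianKernel]

lemma gaussianKernel_neg (z : ℂ) (t : ℝ) : gaussianKernel (-z) (-t) = gaussianKernel z t := by
  simp only [gaussianKernel, Complex.ofReal_neg]
  ring_nf

lemma conj_gaussianKernel (z : ℂ) (t : ℝ) :
    conj (gaussianKernel z t) = gaussianKernel (conj z) t := by
  simp [gaussianKernel, ← Complex.exp_conj]

lemma integrable_exp_neg_mul_sub_sq {b : ℝ} (hb : 0 < b) (c : ℝ) :
    Integrable fun t : ℝ => Real.exp (-b * (t - c) ^ 2) :=
  (integrable_exp_neg_mul_sq hb).comp_sub_right c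

lemma integrable_gaussianKernel_smul (z : ℂ) (a : ℝ →ᵇ E) :
    Integrable fun t => gaussianKernel z t • a t := by
  have kernel : Integrable (gaussianKernel z) := by
    refine ((integrable_exp_neg_mul_sub_sq one_pos z.re).const_mul (Real.exp (z.im ^ 2))).mono'
      (continuous_gaussianKernel z).aestronglyMeasurable (.of_forall fun t => ?_)
    rw [norm_gaussianKernel]
  exact kernel.smul_bdd ‖a‖ a.continuous.aestronglyMeasurable (.of_forall a.norm_coe_le_norm)

lemma norm_integral_gaussianKernel_smul_le (z : ℂ) (a : ℝ →ᵇ E) :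
    ‖∫ t, gaussianKernel z t • a t‖ ≤ Real.exp (z.im ^ 2) * √Real.pi * ‖a‖ := by
  have total : ∫ t : ℝ, Real.exp (-1 * (t - z.re) ^ 2) = √Real.pi := by
    rw [integral_sub_right_eq_self (fun t : ℝ => Real.exp (-1 * t ^ 2)), integral_gaussian, div_one]
  rw [← total, ← integral_const_mul, ← integral_mul_const]
  refine norm_integral_le_of_norm_le
    (((integrable_exp_neg_mul_sub_sq one_pos z.re).const_mul _).mul_const _)
    (.of_forall fun t => ?_)
  rw [norm_smul, norm_gaussianKernel]
  gcongr
  exact a.norm_coe_le_norm t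

/-- The Weierstrass transform `∫ exp (-(t - z)²) a(t) dt` of a bounded continuous function `a`, up
to normalization, with values taken at complex points `z`; it is bundled as a continuous linear map
in `a`. -/
def weierstrassTransform (z : ℂ) : (ℝ →ᵇ E) →L[ℂ] E :=
  LinearMap.mkContinuous
    { toFun a := ∫ t, gaussianKernel z t • a t
      map_add' a b := by
        simp only [BoundedContinuousFunction.add_apply, smul_add]
        exact integral_add (integrable_gaussianKernel_smul z a) (integrable_gaussianKernel_smul z b)
      map_smul' c a := by
        simp only [BoundedContinuousFunction.smul_apply, smul_comm _ c, RingHom.id_apply]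
        exact integral_smul c _ }
    _ (norm_integral_gaussianKernel_smul_le z)

lemma weierstrassTransform_apply (z : ℂ) (a : ℝ →ᵇ E) :
    weierstrassTransform z a = ∫ t, gaussianKernel z t • a t :=
  rfl

lemma norm_weierstrassTransform_le (z : ℂ) (a : ℝ →ᵇ E) :
    ‖weierstrassTransform z a‖ ≤ Real.exp (z.im ^ 2) * √Real.pi * ‖a‖ :=
  norm_integral_gaussianKernel_smul_le z a

lemma weierstrassTransform_translate {a b : ℝ →ᵇ E} {s : ℝ} (h : ∀ t, b t = a (t + s)) (z : ℂ) :
    weierstrassTransform z b = weierstrassTransform (z + s) a := by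
  rw [weierstrassTransform_apply, weierstrassTransform_apply,
    ← integral_add_right_eq_self (fun t => gaussianKernel (z + s) t • a t) s]
  simp only [gaussianKernel_add, h]

lemma weierstrassTransform_reflect {a b : ℝ →ᵇ E} (h : ∀ t, b t = a (-t)) (z : ℂ) :
    weierstrassTransform z b = weierstrassTransform (-z) a := by
  rw [weierstrassTransform_apply, weierstrassTransform_apply,
    ← integral_neg_eq_self (fun t => gaussianKernel (-z) t • a t)]
  simp only [gaussianKernel_neg, h]

lemma map_weierstrassTransform [CompleteSpace E] [CompleteSpace F] (L : E →L[ℂ] F)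
    {a : ℝ →ᵇ E} {b : ℝ →ᵇ F} (h : ∀ t, L (a t) = b t) (z : ℂ) :
    L (weierstrassTransform z a) = weierstrassTransform z b := by
  rw [weierstrassTransform_apply, weierstrassTransform_apply,
    ← L.integral_comp_comm (integrable_gaussianKernel_smul z a)]
  simp only [map_smul, h]

lemma map_weierstrassTransform_conj [CompleteSpace E] [CompleteSpace F] (L : E →L⋆[ℂ] F)
    {a : ℝ →ᵇ E} {b : ℝ →ᵇ F} (h : ∀ t, L (a t) = b t) (z : ℂ) :
    L (weierstrassTransform z a) = weierstrassTransform (conj z) b := by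
  rw [weierstrassTransform_apply, weierstrassTransform_apply,
    ← L.integral_comp_commSL RCLike.conj_smul (integrable_gaussianKernel_smul z a)]
  simp only [map_smulₛₗ, conj_gaussianKernel, h]

lemma inner_weierstrassTransform_eq {K : Type*} [NormedAddCommGroup K] [InnerProductSpace ℂ K]
    [CompleteSpace K] {a b : ℝ →ᵇ K} {ξ η : K} (h : ∀ t, ⟪a t, η⟫_ℂ = ⟪ξ, b t⟫_ℂ) (z : ℂ) :
    ⟪weierstrassTransform z a, η⟫_ℂ = ⟪ξ, weierstrassTransform (conj z) b⟫_ℂ := by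
  let innerB : ℝ →ᵇ ℂ := (innerSL ℂ ξ).compLeftContinuousBounded ℝ b
  calc ⟪weierstrassTransform z a, η⟫_ℂ = weierstrassTransform (conj z) innerB :=
        map_weierstrassTransform_conj (innerSLFlip ℂ η) (b := innerB) h z
    _ = ⟪ξ, weierstrassTransform (conj z) b⟫_ℂ :=
        (map_weierstrassTransform (innerSL ℂ ξ) (b := innerB) (fun _ => rfl) _).symm

lemma norm_gaussianKernel_le_of_dist_le_two {z w : ℂ} (h : dist w z ≤ 2) (t : ℝ) :
    ‖gaussianKernel w t‖ ≤
      Real.exp (4 + (|z.im| + 2) ^ 2) * Real.exp (-(1 / 2) * (t - z.re) ^ 2) := by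
  rw [dist_eq_norm] at h
  have re_le : |w.re - z.re| ≤ 2 := (Complex.abs_re_le_norm (w - z)).trans h
  have im_le : |w.im| ≤ |z.im| + 2 := by
    have im_sub_le : |w.im - z.im| ≤ 2 := (Complex.abs_im_le_norm (w - z)).trans h
    linarith [abs_sub_abs_le_abs_sub w.im z.im]
  have re_sq_le : (w.re - z.re) ^ 2 ≤ 2 ^ 2 := by
    rw [← sq_abs]
    gcongr
  have im_sq_le : w.im ^ 2 ≤ (|z.im| + 2) ^ 2 := by
    rw [← sq_abs w.im]
    gcongr
  rw [norm_gaussianKernel, ← Real.exp_add, ← Real.exp_add, Real.exp_le_exp]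
  nlinarith [sq_nonneg ((t - w.re) - (w.re - z.re))]

lemma norm_deriv_gaussianKernel_le_of_dist_lt_one {z w : ℂ} (h : dist w z < 1) (t : ℝ) :
    ‖deriv (gaussianKernel · t) w‖ ≤
      Real.exp (4 + (|z.im| + 2) ^ 2) * Real.exp (-(1 / 2) * (t - z.re) ^ 2) := by
  have entire : Differentiable ℂ (gaussianKernel · t) :=
    fun u => (hasDerivAt_gaussianKernel u t).differentiableAt
  have cauchy := Complex.norm_deriv_le_of_forall_mem_sphere_norm_le one_pos
    (entire.diffContOnCl (s := Metric.ball w 1)) fun u hu =>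
      norm_gaussianKernel_le_of_dist_le_two (z := z) (t := t)
        (by linarith [dist_triangle u w z, Metric.mem_sphere.mp hu])
  simpa only [div_one] using cauchy

lemma differentiable_weierstrassTransform (a : ℝ →ᵇ E) :
    Differentiable ℂ fun z => weierstrassTransform z a := by
  intro z
  have dominating : Integrable fun t : ℝ =>
      Real.exp (4 + (|z.im| + 2) ^ 2) * Real.exp (-(1 / 2) * (t - z.re) ^ 2) * ‖a‖ :=
    ((integrable_exp_neg_mul_sub_sq one_half_pos z.re).const_mul _).mul_const _
  have kernel_cont := continuous_gaussianKernel z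
  refine (hasDerivAt_integral_of_dominated_loc_of_deriv_le
    (F' := fun w t => (gaussianKernel w t * (2 * (t - w))) • a t)
    (Metric.ball_mem_nhds z one_pos)
    (.of_forall fun w => (integrable_gaussianKernel_smul w a).aestronglyMeasurable)
    (integrable_gaussianKernel_smul z a)
    (Continuous.aestronglyMeasurable (by fun_prop)) (.of_forall fun t w hw => ?_) dominating
    (.of_forall fun t w _ => (hasDerivAt_gaussianKernel w t).smul_const _)).2.differentiableAt
  rw [← (hasDerivAt_gaussianKernel w t).deriv, norm_smul]
  gcongr
  · exact norm_deriv_gaussianKernel_le_of_dist_lt_one hw t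
  · exact a.norm_coe_le_norm t

-- Completing the square: `-t² - 2πitw = z² - (t - z)²` for `z = -πiw`.
lemma fourier_gaussianKernel_smul (a : ℝ →ᵇ E) (w : ℝ) :
    𝓕 (fun t => gaussianKernel 0 t • a t) w =
      Complex.exp ((-(Real.pi * w) * Complex.I) ^ 2) •
        weierstrassTransform (-(Real.pi * w) * Complex.I) a := by
  rw [Real.fourier_eq', weierstrassTransform_apply, ← integral_smul]
  congr 1 with t
  simp only [gaussianKernel, smul_smul, ← Complex.exp_add]
  congr 2
  simp only [RCLike.inner_apply, Real.ringHom_apply, Complex.ofReal_neg, Complex.ofReal_mul,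
    Complex.ofReal_ofNat]
  ring

lemma eq_zero_of_weierstrassTransform_eq_zero [CompleteSpace E] {a : ℝ →ᵇ E}
    (h : ∀ z, weierstrassTransform z a = 0) : a = 0 := by
  let f : ℝ → E := fun t => gaussianKernel 0 t • a t
  have fourier_eq_zero : 𝓕 f = 0 := by
    ext w
    rw [fourier_gaussianKernel_smul, h, smul_zero, Pi.zero_apply]
  have f_cont : Continuous f := (continuous_gaussianKernel 0).smul a.continuous
  have inversion : 𝓕⁻ (𝓕 f) = f :=
    f_cont.fourierInv_fourier_eq (integrable_gaussianKernel_smul 0 a)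
      (fourier_eq_zero ▸ integrable_zero _ _ _)
  ext t
  have f_eq_zero : f t = 0 := by
    rw [← inversion, fourier_eq_zero, Real.fourierInv_eq']
    simp
  exact (smul_eq_zero.mp f_eq_zero).resolve_left (Complex.exp_ne_zero _)

lemma isBounded_range_weierstrassTransform_of_periodic {a : ℝ →ᵇ E}
    (h : Function.Periodic (fun z => weierstrassTransform z a) Complex.I) :
    Bornology.IsBounded (Set.range fun z => weierstrassTransform z a) := by
  rw [isBounded_iff_forall_norm_le]
  refine ⟨Real.exp 1 * √Real.pi * ‖a‖, ?_⟩
  rintro _ ⟨z, rfl⟩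
  have shift := h.sub_int_mul_eq (x := z) ⌊z.im⌋
  have im_shift : (z - ⌊z.im⌋ * Complex.I).im = Int.fract z.im := by
    simp [Int.self_sub_floor]
  beta_reduce at shift ⊢
  rw [← shift]
  refine (norm_weierstrassTransform_le _ a).trans ?_
  rw [im_shift]
  gcongr
  exact pow_le_one₀ (Int.fract_nonneg _) (Int.fract_lt_one _).le

theorem apply_eq_apply_of_periodic_weierstrassTransform [CompleteSpace E] {a : ℝ →ᵇ E}
    (h : Function.Periodic (fun z => weierstrassTransform z a) Complex.I) (s t : ℝ) :
    a s = a t := by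
  have transform_const : ∀ z w, weierstrassTransform z a = weierstrassTransform w a :=
    (differentiable_weierstrassTransform a).apply_eq_apply_of_bounded
      (isBounded_range_weierstrassTransform_of_periodic h)
  let b : ℝ →ᵇ E := a.compContinuous (ContinuousMap.addRight (s - t))
  have translate_eq : b - a = 0 := eq_zero_of_weierstrassTransform_eq_zero fun z => by
    rw [map_sub, weierstrassTransform_translate (a := a) (b := b) (s := s - t) (fun _ => rfl),
      transform_const _ z, sub_self]
  simpa [b, sub_eq_zero] using DFunLike.congr_fun translate_eq t

end Weierstrass

namespace GradedVN

lemma inner_star_apply (x : H →L[ℂ] H) (ξ η : H) : ⟪star x ξ, η⟫_ℂ = ⟪ξ, x η⟫_ℂ := by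
  rw [ContinuousLinearMap.star_eq_adjoint, ContinuousLinearMap.adjoint_inner_left]

variable (N : GradedVN H)

section ModularFlow

lemma norm_J (ξ : H) : ‖N.J ξ‖ = ‖ξ‖ := by
  have h := N.J_inner ξ ξ
  rw [inner_self_eq_norm_sq_to_K, inner_self_eq_norm_sq_to_K] at h
  exact (sq_eq_sq₀ (norm_nonneg _) (norm_nonneg _)).mp (by exact_mod_cast h)

/-- The modular conjugation `J` as a continuous conjugate-linear map. -/
def conjugation : H →L⋆[ℂ] H :=
  LinearMap.mkContinuous { toFun := N.J, map_add' := N.J_add, map_smul' := N.J_smul } 1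
    fun ξ => by simp [norm_J]

lemma continuous_J : Continuous N.J := N.conjugation.continuous

lemma inner_U_left (t : ℝ) (ξ η : H) : ⟪N.U t ξ, η⟫_ℂ = ⟪ξ, N.U (-t) η⟫_ℂ := by
  rw [← (N.U t).inner_map_map ξ, ← N.U_add, add_neg_cancel, N.U_zero]

lemma continuous_U_apply {a : ℝ → H} (ha : Continuous a) : Continuous fun t => N.U t (a t) := by
  refine continuous_iff_continuousAt.mpr fun s => ?_
  have moving_part : Tendsto (fun t => N.U t (a t - a s)) (nhds s) (nhds 0) := by
    rw [tendsto_zero_iff_norm_tendsto_zero]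
    simp only [LinearIsometryEquiv.norm_map]
    exact tendsto_iff_norm_sub_tendsto_zero.mp (ha.tendsto s)
  simpa [ContinuousAt] using moving_part.add ((N.U_cont (a s)).tendsto s)

/-- The orbit `t ↦ Δ^{it} ξ` of a vector under the modular group. -/
def orbit (ξ : H) : ℝ →ᵇ H :=
  .ofNormedAddCommGroup (fun t => N.U t ξ) (N.U_cont ξ) ‖ξ‖ fun t => (N.U t).norm_map ξ |>.le

lemma orbit_apply (ξ : H) (t : ℝ) : N.orbit ξ t = N.U t ξ := rfl

/-- The modular flow `t ↦ Δ^{it} y Δ^{-it}` of an operator, as a continuous linear map sending a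
vector `ξ` to the bounded continuous function `t ↦ Δ^{it} y Δ^{-it} ξ`. -/
def flowOrbit (y : H →L[ℂ] H) : H →L[ℂ] (ℝ →ᵇ H) :=
  LinearMap.mkContinuous
    { toFun ξ := .ofNormedAddCommGroup (fun t => N.U t (y (N.U (-t) ξ)))
        (N.continuous_U_apply (y.continuous.comp ((N.U_cont ξ).comp continuous_neg))) (‖y‖ * ‖ξ‖)
        fun t => by simpa using y.le_opNorm (N.U (-t) ξ)
      map_add' ξ η := by ext t; simp
      map_smul' c ξ := by ext t; simp }
    ‖y‖ fun ξ => (BoundedContinuousFunction.norm_le (by positivity)).mpr fun t => by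
      simpa using y.le_opNorm (N.U (-t) ξ)

lemma flowOrbit_apply (y : H →L[ℂ] H) (ξ : H) (t : ℝ) :
    N.flowOrbit y ξ t = N.U t (y (N.U (-t) ξ)) :=
  rfl

/-- The Gaussian mean `∫ exp (-(t - z)²) Δ^{it} y Δ^{-it} dt` of the modular flow of `y`. For
`y ∈ M` these are elements of `M` whose orbits at `Ω` extend to entire functions, as `S_cond`
requires. -/
def flowMean (y : H →L[ℂ] H) (z : ℂ) : H →L[ℂ] H :=
  (weierstrassTransform z).comp (N.flowOrbit y)

lemma U_weierstrassTransform_orbit (s : ℝ) (ξ : H) (z : ℂ) :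
    N.U s (weierstrassTransform z (N.orbit ξ)) = weierstrassTransform (z + s) (N.orbit ξ) := by
  let shifted : ℝ →ᵇ H := (N.orbit ξ).compContinuous (ContinuousMap.addRight s)
  have U_orbit (t : ℝ) : N.U s (N.orbit ξ t) = shifted t := by
    change N.U s (N.U t ξ) = N.U (t + s) ξ
    rw [← N.U_add, add_comm]
  calc N.U s (weierstrassTransform z (N.orbit ξ)) = weierstrassTransform z shifted :=
        map_weierstrassTransform ((N.U s).toContinuousLinearEquiv : H →L[ℂ] H) U_orbit z
    _ = weierstrassTransform (z + s) (N.orbit ξ) :=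
        weierstrassTransform_translate (fun _ => rfl) z

lemma J_weierstrassTransform_orbit (ξ : H) (z : ℂ) :
    N.J (weierstrassTransform z (N.orbit ξ)) =
      weierstrassTransform (conj z) (N.orbit (N.J ξ)) :=
  map_weierstrassTransform_conj N.conjugation (fun t => N.J_U t ξ) z

lemma inner_weierstrassTransform_orbit_left (ξ η : H) (z : ℂ) :
    ⟪weierstrassTransform z (N.orbit ξ), η⟫_ℂ =
      ⟪ξ, weierstrassTransform (-conj z) (N.orbit η)⟫_ℂ := by
  let reflected : ℝ →ᵇ H := (N.orbit η).compContinuous ⟨Neg.neg, continuous_neg⟩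
  rw [inner_weierstrassTransform_eq (b := reflected) (fun t => N.inner_U_left t ξ η),
    weierstrassTransform_reflect (a := N.orbit η) (fun _ => rfl)]

lemma flowMean_apply_Ω (y : H →L[ℂ] H) (z : ℂ) :
    N.flowMean y z N.Ω = weierstrassTransform z (N.orbit (y N.Ω)) := by
  have orbit_eq : N.flowOrbit y N.Ω = N.orbit (y N.Ω) := by
    ext t
    rw [flowOrbit_apply, orbit_apply, N.U_Ω]
  rw [flowMean, ContinuousLinearMap.comp_apply, orbit_eq]

lemma flowMean_mem {y : H →L[ℂ] H} (hy : y ∈ N.M) (z : ℂ) : N.flowMean y z ∈ N.M := by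
  rw [← N.M.commutant_commutant, VonNeumannAlgebra.mem_commutant_iff]
  intro g hg
  rw [VonNeumannAlgebra.mem_commutant_iff] at hg
  have commutes (ξ : H) (t : ℝ) : g (N.flowOrbit y ξ t) = N.flowOrbit y (g ξ) t := by
    obtain ⟨w, hw, w_apply⟩ := N.flow_mem t y hy
    rw [flowOrbit_apply, flowOrbit_apply, ← w_apply, ← w_apply]
    exact (DFunLike.congr_fun (hg w hw) ξ).symm
  ext ξ
  exact map_weierstrassTransform g (commutes ξ) z

lemma star_flowMean (y : H →L[ℂ] H) (z : ℂ) :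
    star (N.flowMean y z) = N.flowMean (star y) (conj z) := by
  rw [ContinuousLinearMap.star_eq_adjoint, eq_comm, ContinuousLinearMap.eq_adjoint_iff]
  intro ξ η
  have pointwise (t : ℝ) : ⟪N.flowOrbit (star y) ξ t, η⟫_ℂ = ⟪ξ, N.flowOrbit y η t⟫_ℂ := by
    rw [flowOrbit_apply, flowOrbit_apply, inner_U_left, inner_star_apply, inner_U_left, neg_neg]
  simpa only [Complex.conj_conj, flowMean, ContinuousLinearMap.comp_apply] using
    inner_weierstrassTransform_eq pointwise (conj z)

lemma J_weierstrassTransform_orbit_sub_half_I {y : H →L[ℂ] H} (hy : y ∈ N.M) (z : ℂ) :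
    N.J (weierstrassTransform (z - Complex.I / 2) (N.orbit (y N.Ω))) =
      weierstrassTransform (conj z) (N.orbit (star y N.Ω)) := by
  have entire : Differentiable ℂ fun w => weierstrassTransform (z + w) (N.orbit (y N.Ω)) :=
    (differentiable_weierstrassTransform _).comp (differentiable_id.const_add z)
  have S_flowMean := N.S_cond (N.flowMean y z) (N.flowMean_mem hy z) _ entire fun t => by
    rw [flowMean_apply_Ω, U_weierstrassTransform_orbit]
  rwa [star_flowMean, flowMean_apply_Ω, neg_div, ← sub_eq_add_neg] at S_flowMean

lemma weierstrassTransform_orbit_J_star {x : H →L[ℂ] H} (hx : x ∈ N.M) (z : ℂ) :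
    weierstrassTransform z (N.orbit (N.J (star x N.Ω))) =
      weierstrassTransform (z - Complex.I / 2) (N.orbit (x N.Ω)) := by
  rw [← N.J_invol (weierstrassTransform (z - Complex.I / 2) _),
    N.J_weierstrassTransform_orbit_sub_half_I hx, J_weierstrassTransform_orbit, Complex.conj_conj]

lemma weierstrassTransform_orbit_of_mem_centralizerSet {x : H →L[ℂ] H}
    (hx : x ∈ N.centralizerSet) (z : ℂ) :
    weierstrassTransform z (N.orbit (x N.Ω)) =
      weierstrassTransform (z - Complex.I / 2) (N.orbit (N.J (star x N.Ω))) := by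
  rw [← sub_eq_zero]
  refine N.cyclic.eq_zero_of_inner_right (𝕜 := ℂ) ?_
  rintro _ ⟨y, hy, rfl⟩
  rw [inner_sub_right, sub_eq_zero]
  set w := -conj z with hw
  have conj_w : -conj w = z := by simp [hw]
  have conj_w_sub : -conj (w - Complex.I / 2) = z - Complex.I / 2 := by
    simp only [hw, map_sub, map_neg, Complex.conj_conj, map_div₀, Complex.conj_I,
      Complex.conj_ofNat]
    ring
  calc ⟪y N.Ω, weierstrassTransform z (N.orbit (x N.Ω))⟫_ℂ
      = ⟪N.flowMean y w N.Ω, x N.Ω⟫_ℂ := by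
        rw [flowMean_apply_Ω, inner_weierstrassTransform_orbit_left, conj_w]
    _ = ⟪N.Ω, star (N.flowMean y w) (x N.Ω)⟫_ℂ := by
        rw [← inner_star_apply (star _), star_star]
    _ = ⟪N.Ω, x (star (N.flowMean y w) N.Ω)⟫_ℂ := (hx.2 _ (star_mem (N.flowMean_mem hy w))).symm
    _ = ⟪star x N.Ω, star (N.flowMean y w) N.Ω⟫_ℂ := (inner_star_apply x _ _).symm
    _ = ⟪star x N.Ω, N.J (weierstrassTransform (w - Complex.I / 2) (N.orbit (y N.Ω)))⟫_ℂ := by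
        rw [star_flowMean, flowMean_apply_Ω, N.J_weierstrassTransform_orbit_sub_half_I hy]
    _ = ⟪weierstrassTransform (w - Complex.I / 2) (N.orbit (y N.Ω)), N.J (star x N.Ω)⟫_ℂ := by
        rw [← N.J_inner, N.J_invol]
    _ = ⟪y N.Ω, weierstrassTransform (z - Complex.I / 2) (N.orbit (N.J (star x N.Ω)))⟫_ℂ := by
        rw [inner_weierstrassTransform_orbit_left, conj_w_sub]

theorem U_apply_Ω_of_mem_centralizerSet {x : H →L[ℂ] H} (hx : x ∈ N.centralizerSet) (t : ℝ) :
    N.U t (x N.Ω) = x N.Ω := by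
  have kms_periodic :
      Function.Periodic (fun z => weierstrassTransform z (N.orbit (x N.Ω))) Complex.I := by
    intro z
    beta_reduce
    rw [N.weierstrassTransform_orbit_of_mem_centralizerSet hx,
      N.weierstrassTransform_orbit_J_star hx.1]
    congr 1
    ring_nf
  have orbit_const := apply_eq_apply_of_periodic_weierstrassTransform kms_periodic t 0
  exact orbit_const.trans (N.U_zero _)

theorem J_apply_Ω_of_mem_centralizerSet {x : H →L[ℂ] H} (hx : x ∈ N.centralizerSet) :
    N.J (x N.Ω) = star x N.Ω :=
  N.S_cond x hx.1 _ (differentiable_const (x N.Ω)) fun t =>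
    (N.U_apply_Ω_of_mem_centralizerSet hx t).symm

end ModularFlow

section Intertwiner

/-- `x` intertwines the identity and the grading automorphism `Ad_V` on `M`; `Ad_V` is freely acting
when `M` contains no such `x` other than `0`. -/
def IsIntertwiner (x : H →L[ℂ] H) : Prop :=
  ∀ y ∈ N.M, x * y = N.V * y * N.V * x

lemma V_mul_V : N.V * N.V = 1 := by
  ext ξ
  exact N.V_invol ξ

lemma V_conj_mem {y : H →L[ℂ] H} (hy : y ∈ N.M) : N.V * y * N.V ∈ N.M := by
  obtain ⟨w, hw, w_apply⟩ := N.V_mem y hy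
  have eq_w : N.V * y * N.V = w := by
    ext ξ
    exact (w_apply ξ).symm
  rwa [eq_w]

lemma V_conj_V_conj (y : H →L[ℂ] H) : N.V * (N.V * y * N.V) * N.V = y := by
  simp only [mul_assoc, V_mul_V, mul_one]
  rw [← mul_assoc, V_mul_V, one_mul]

variable {N} {x : H →L[ℂ] H}

lemma IsIntertwiner.mul_V_conj (h : N.IsIntertwiner x) {y : H →L[ℂ] H} (hy : y ∈ N.M) :
    x * (N.V * y * N.V) = y * x := by
  rw [h _ (N.V_conj_mem hy), V_conj_V_conj]

lemma IsIntertwiner.V_conj (h : N.IsIntertwiner x) : N.IsIntertwiner (N.V * x * N.V) := by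
  intro y hy
  calc N.V * x * N.V * y = N.V * (x * (N.V * y * N.V)) * N.V := by
        simp only [mul_assoc, V_mul_V, mul_one]
    _ = N.V * (y * x) * N.V := by rw [h.mul_V_conj hy]
    _ = N.V * y * (N.V * N.V) * x * N.V := by simp only [V_mul_V, mul_assoc, one_mul]
    _ = N.V * y * N.V * (N.V * x * N.V) := by simp only [mul_assoc]

lemma IsIntertwiner.sub {y : H →L[ℂ] H} (hx : N.IsIntertwiner x) (hy : N.IsIntertwiner y) :
    N.IsIntertwiner (x - y) := by
  intro w hw
  rw [sub_mul, mul_sub, hx w hw, hy w hw]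

lemma IsIntertwiner.eq_zero_of_odd (h : N.IsIntertwiner x) (hx : x ∈ N.M)
    (odd : N.V * x * N.V = -x) : x = 0 := by
  have anticommute : x * star x = -(star x * x) := by
    rw [h _ (star_mem hx), ← neg_mul, ← star_neg, ← odd]
    simp only [star_mul, N.V_star, mul_assoc]
  have star_mul_self_eq_zero : star x * x = 0 :=
    le_antisymm (neg_nonneg.mp (anticommute ▸ mul_star_self_nonneg x)) (star_mul_self_nonneg x)
  exact (CStarRing.star_mul_self_eq_zero_iff x).mp star_mul_self_eq_zero

lemma IsIntertwiner.even (h : N.IsIntertwiner x) (hx : x ∈ N.M) : N.V * x * N.V = x := by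
  refine (sub_eq_zero.mp ((h.sub h.V_conj).eq_zero_of_odd (sub_mem hx (N.V_conj_mem hx)) ?_)).symm
  rw [mul_sub, sub_mul, V_conj_V_conj, neg_sub]

lemma IsIntertwiner.mem_centralizerSet (h : N.IsIntertwiner x) (hx : x ∈ N.M) :
    x ∈ N.centralizerSet := by
  have V_fixes : N.V (x N.Ω) = x N.Ω := by
    conv_rhs => rw [← h.even hx]
    simp [N.V_Ω]
  refine ⟨hx, fun y hy => ?_⟩
  calc ⟪N.Ω, x (y N.Ω)⟫_ℂ = ⟪N.Ω, N.V (y (N.V (x N.Ω)))⟫_ℂ :=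
        congrArg (inner ℂ N.Ω) (DFunLike.congr_fun (h y hy) N.Ω)
    _ = ⟪N.Ω, y (x N.Ω)⟫_ℂ := by rw [V_fixes, ← inner_star_apply, N.V_star, N.V_Ω]

lemma IsIntertwiner.mem_twistedCenter (h : N.IsIntertwiner x) (hx : x ∈ N.M) :
    x ∈ N.twistedCenter := by
  have J_star : N.J (star x N.Ω) = x N.Ω := by
    rw [← J_apply_Ω_of_mem_centralizerSet N (h.mem_centralizerSet hx), N.J_invol]
  have eq_on_cyclic : Set.EqOn (fun ξ => N.J (star x (N.J ξ))) (fun ξ => x (N.V ξ))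
      {ξ | ∃ y ∈ N.M, y N.Ω = ξ} := by
    rintro _ ⟨y, hy, rfl⟩
    calc N.J (star x (N.J (y N.Ω))) = y (N.J (star x (N.J N.Ω))) :=
          N.tomita _ (star_mem hx) y hy N.Ω
      _ = y (x N.Ω) := by rw [N.J_Ω, J_star]
      _ = x (N.V (y (N.V N.Ω))) := (DFunLike.congr_fun (h.mul_V_conj hy) N.Ω).symm
      _ = x (N.V (y N.Ω)) := by rw [N.V_Ω]
  have J_cont := N.continuous_J
  exact ⟨hx, congrFun (Continuous.ext_on N.cyclic (by fun_prop) (by fun_prop) eq_on_cyclic)⟩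

lemma isIntertwiner_of_mem_twistedCenter (hx : x ∈ N.twistedCenter) : N.IsIntertwiner x := by
  obtain ⟨hx, twist⟩ := hx
  intro y hy
  ext ξ
  have commutes := N.tomita (star x) (star_mem hx) _ (N.V_conj_mem hy) (N.V ξ)
  simpa [twist, N.V_invol] using commutes

theorem mem_twistedCenter_iff : x ∈ N.twistedCenter ↔ x ∈ N.M ∧ N.IsIntertwiner x :=
  ⟨fun hx => ⟨hx.1, isIntertwiner_of_mem_twistedCenter hx⟩, fun ⟨hx, h⟩ => h.mem_twistedCenter hx⟩

end Intertwiner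

end GradedVN

/-- `Z(M, V) = {0}` if and only if `Ad_V` is freely acting on `M`, i.e.
the only `x ∈ M` with `x y = (V y V) x` for all `y ∈ M` is `x = 0`. -/
theorem twisted_center_trivial_iff_freely_acting {H : Type*} [NormedAddCommGroup H]
    [InnerProductSpace ℂ H] [CompleteSpace H] (N : GradedVN H) :
    N.twistedCenter = {0} ↔
      ∀ x ∈ N.M, (∀ y ∈ N.M, x * y = N.V * y * N.V * x) → x = 0 := by
  have zero_mem_twistedCenter : 0 ∈ N.twistedCenter :=
    GradedVN.mem_twistedCenter_iff.mpr ⟨zero_mem _, fun y _ => by rw [zero_mul, mul_zero]⟩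
  rw [Set.eq_singleton_iff_unique_mem, and_iff_right zero_mem_twistedCenter]
  simp only [GradedVN.mem_twistedCenter_iff, and_imp, GradedVN.IsIntertwiner]

end
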